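/- arXiv:2002.01178 — 3 statements merged into one kernel-verified Lean document; each statement's English description precedes it below -/
import Mathlib

section
/- Let s_1, …, s_k be binary strings and let m := max_{i∈[k]} |s̃_i| be the maximum condensation length. If z is a mean of s_1, …, s_k, then |z̃| ≤ m + 1. -/
/-- One step of a warping path: move down, right, or diagonally. -/
def wpStep (a b : ℕ × ℕ) : Prop :=
  (b.1 = a.1 + 1 ∧ b.2 = a.2) ∨ (b.1 = a.1 ∧ b.2 = a.2 + 1) ∨
    (b.1 = a.1 + 1 ∧ b.2 = a.2 + 1)

/-- A warping path of order `m × n` (0-based indices). -/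
def IsWarpingPath (m n : ℕ) (p : List (ℕ × ℕ)) : Prop :=
  p.head? = some (0, 0) ∧ p.getLast? = some (m - 1, n - 1) ∧
    List.Chain' wpStep p ∧ ∀ q ∈ p, q.1 < m ∧ q.2 < n

/-- The cost of aligning binary strings `x` and `y` along path `p`:
the number of aligned mismatching pairs (for binary symbols,
`(x[i] - y[j])^2` is `0` if the symbols agree and `1` otherwise). -/
def pathCost (x y : List Bool) (p : List (ℕ × ℕ)) : ℕ :=
  (p.map fun q => if x.getD q.1 false = y.getD q.2 false then 0 else 1).sum

/-- The squared dynamic time warping distance `dtw(x,y)²` of two binary strings. -/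
noncomputable def dtwSq (x y : List Bool) : ℕ :=
  sInf {c | ∃ p, IsWarpingPath x.length y.length p ∧ pathCost x y p = c}

/-- The dynamic time warping distance `dtw(x,y)`. -/
noncomputable def dtw (x y : List Bool) : ℝ :=
  Real.sqrt (dtwSq x y)

/-- The condensation of a binary string: collapse every maximal run of equal
consecutive symbols to a single symbol. -/
def condense : List Bool → List Bool
  | [] => []
  | [a] => [a]
  | a :: b :: rest => if a = b then condense (b :: rest) else a :: condense (b :: rest)

/-- Auxiliary function collecting the block sizes of a binary string. -/
def blockSizesAux : Bool → ℕ → List Bool → List ℕ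
  | _, cnt, [] => [cnt]
  | cur, cnt, a :: rest =>
      if a = cur then blockSizesAux cur (cnt + 1) rest
      else cnt :: blockSizesAux a 1 rest

/-- The list of block sizes of a binary string (sizes of the maximal runs
of equal consecutive symbols, from left to right). -/
def blockSizes : List Bool → List ℕ
  | [] => []
  | a :: rest => blockSizesAux a 1 rest

/-- The objective `F(z) = Σᵢ dtw(sᵢ, z)²`. -/
noncomputable def Fobj (ss : List (List Bool)) (z : List Bool) : ℕ :=
  (ss.map fun s => dtwSq s z).sum

/-- `z` is a mean of the strings `ss`: a nonempty binary string minimizing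
`F` among all nonempty binary strings. -/
def IsMean (ss : List (List Bool)) (z : List Bool) : Prop :=
  z ≠ [] ∧ ∀ w : List Bool, w ≠ [] → Fobj ss z ≤ Fobj ss w

/-- The optimal value of a Min 1-Separated Sum instance with integers `b`
(1-based indexing) and selection size `r`: minimize the sum of `r` selected
integers, no two of which are consecutive. -/
noncomputable def mssValue (b : List ℕ) (r : ℕ) : ℕ :=
  sInf {s | ∃ I : List ℕ, I.length = r ∧ (∀ i ∈ I, 1 ≤ i ∧ i ≤ b.length) ∧
    List.Chain' (fun a c => a + 2 ≤ c) I ∧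
    (I.map fun i => b.getD (i - 1) 0).sum = s}

def mm (a b : Bool) : ℕ := if a = b then 0 else 1

def altS (b : Bool) : ℕ → List Bool
  | 0 => []
  | n + 1 => b :: altS (!b) n

inductive WAl : List Bool → List Bool → ℕ → Prop
  | base (a b : Bool) : WAl [a] [b] (mm a b)
  | down (a b : Bool) (x y : List Bool) (c : ℕ) : WAl x (b :: y) c →
      WAl (a :: x) (b :: y) (mm a b + c)
  | right (a b : Bool) (x y : List Bool) (c : ℕ) : WAl (a :: x) y c →
      WAl (a :: x) (b :: y) (mm a b + c)
  | diag (a b : Bool) (x y : List Bool) (c : ℕ) : WAl x y c →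
      WAl (a :: x) (b :: y) (mm a b + c)

theorem WAl.pos {x y : List Bool} {c : ℕ} (h : WAl x y c) : 0 < x.length ∧ 0 < y.length := by
  cases h <;> simp

theorem shift_path (a b : Bool) (x y x' y' : List Bool) (u v : ℕ)
    (huv : (u = 1 ∧ v = 0) ∨ (u = 0 ∧ v = 1) ∨ (u = 1 ∧ v = 1))
    (hx : 0 < x.length) (hy : 0 < y.length)
    (hxl : (a :: x').length = x.length + u) (hyl : (b :: y').length = y.length + v)
    (hxg : ∀ i, (a :: x').getD (i + u) false = x.getD i false)
    (hyg : ∀ i, (b :: y').getD (i + v) false = y.getD i false)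
    (p : List (ℕ × ℕ)) (hp : IsWarpingPath x.length y.length p) :
    ∃ p', IsWarpingPath (a :: x').length (b :: y').length p' ∧
      pathCost (a :: x') (b :: y') p' = mm a b + pathCost x y p := by
  obtain ⟨h1, h2, h3, h4⟩ := hp
  cases p with
  | nil => simp at h1
  | cons q p =>
  simp only [List.head?_cons, Option.some.injEq] at h1
  refine ⟨(0, 0) :: (q :: p).map (fun r => (r.1 + u, r.2 + v)), ⟨rfl, ?_, ?_, ?_⟩, ?_⟩
  · rw [List.map_cons, List.getLast?_cons_cons,
      ← List.map_cons (f := fun r : ℕ × ℕ => (r.1 + u, r.2 + v)), List.getLast?_map, h2, hxl, hyl]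
    simp only [Option.map_some, Option.some.injEq, Prod.mk.injEq]
    omega
  · rw [List.map_cons]
    refine List.IsChain.cons_cons ?_ ?_
    · subst h1; simp only [wpStep]; omega
    · rw [← List.map_cons (f := fun r : ℕ × ℕ => (r.1 + u, r.2 + v))]
      refine List.isChain_map_of_isChain _ ?_ h3
      intro r s hrs
      simp only [wpStep] at *
      omega
  · intro r hr
    rw [hxl, hyl]
    rcases List.mem_cons.1 hr with rfl | hr
    · simp; omega
    · obtain ⟨t, ht, rfl⟩ := List.mem_map.1 hr
      have := h4 t ht
      simp only; omega
  · unfold pathCost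
    rw [List.map_cons, List.sum_cons, List.map_map]
    congr 1
    congr 1
    apply List.map_congr_left
    intro r _
    simp only [Function.comp, hxg, hyg]

theorem WAl.path {x y : List Bool} {c : ℕ} (h : WAl x y c) :
    ∃ p, IsWarpingPath x.length y.length p ∧ pathCost x y p = c := by
  induction h with
  | base a b => exact ⟨[(0,0)], ⟨rfl, rfl, List.isChain_singleton _, by simp⟩, by simp [pathCost, mm]⟩
  | down a b x y c h ih =>
    obtain ⟨p, hp, hc⟩ := ih
    rw [← hc]
    exact shift_path a b x (b :: y) x y 1 0 (by simp) h.pos.1 h.pos.2 rfl rfl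
      (by simp) (by simp) p hp
  | right a b x y c h ih =>
    obtain ⟨p, hp, hc⟩ := ih
    rw [← hc]
    exact shift_path a b (a :: x) y x y 0 1 (by simp) h.pos.1 h.pos.2 rfl rfl
      (by simp) (by simp) p hp
  | diag a b x y c h ih =>
    obtain ⟨p, hp, hc⟩ := ih
    rw [← hc]
    exact shift_path a b x y x y 1 1 (by simp) h.pos.1 h.pos.2 rfl rfl
      (by simp) (by simp) p hp

theorem WAl.le {x y : List Bool} {c : ℕ} (h : WAl x y c) : dtwSq x y ≤ c :=
  Nat.sInf_le h.path

theorem WAl_single (c : Bool) (n : ℕ) :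
    WAl [c] (altS c (n + 1)) ((n + 1) / 2) ∧ WAl [c] (altS (!c) (n + 1)) ((n + 2) / 2) := by
  induction n with
  | zero => 
    have h1 := WAl.base c c
    have h2 := WAl.base c (!c)
    simp only [mm] at h1 h2
    simpa [altS] using And.intro h1 h2
  | succ n ih =>
    have h1 := WAl.right c c [] _ _ ih.2
    have h2 := WAl.right c (!c) [] (altS c (n+1)) _ ih.1
    refine ⟨?_, ?_⟩
    · have : (n + 1 + 1) / 2 = n / 2 + 1 := by omega
      rw [this]
      simpa [mm, altS] using h1
    · have : (n + 1 + 2) / 2 = 1 + (n+1)/2 := by omega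
      rw [this]
      simpa [mm, altS] using h2

theorem condense_pos (c : Bool) (t : List Bool) : 0 < (condense (c :: t)).length := by
  induction t generalizing c with
  | nil => simp [condense]
  | cons d t ih =>
    unfold condense
    split
    · exact ih d
    · simp

theorem WAl_same (t : List Bool) : ∀ (c : Bool) (n : ℕ), (condense (c :: t)).length ≤ n →
    WAl (c :: t) (altS c n) ((n + 1 - (condense (c :: t)).length) / 2) := by
  induction t with
  | nil =>
    intro c n hn
    simp only [condense, List.length_singleton] at *
    obtain ⟨k, rfl⟩ : ∃ k, n = k + 1 := ⟨n - 1, by omega⟩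
    exact (WAl_single c k).1
  | cons d t ih =>
    intro c n hn
    have hp := condense_pos d t
    by_cases hcd : c = d
    · subst hcd
      have e : condense (c :: c :: t) = condense (c :: t) := by simp [condense]
      rw [e] at hn ⊢
      obtain ⟨k, rfl⟩ : ∃ k, n = k + 1 := ⟨n - 1, by omega⟩
      have := WAl.down c c _ _ _ (ih c (k+1) hn)
      simpa [mm, altS] using this
    · have e : condense (c :: d :: t) = c :: condense (d :: t) := by simp [condense, hcd]
      rw [e, List.length_cons] at hn ⊢
      obtain ⟨k, rfl⟩ : ∃ k, n = k + 1 := ⟨n - 1, by omega⟩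
      have hd : d = !c := by cases c <;> cases d <;> simp_all
      have := WAl.diag c c _ _ _ (ih d k (by omega))
      rw [hd] at this ⊢
      simpa [mm, altS] using this

theorem WAl_diff (t : List Bool) (c : Bool) (n : ℕ) (h : (condense (c :: t)).length < n) :
    WAl (c :: t) (altS (!c) n) (1 + (n - (condense (c :: t)).length) / 2) := by
  obtain ⟨k, rfl⟩ : ∃ k, n = k + 1 := ⟨n - 1, by omega⟩
  have := WAl.right c (!c) _ _ _ (WAl_same t c k (by omega))
  simpa [mm, altS] using this

def chg (x : List Bool) (i : ℕ) : ℕ :=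
  ∑ k ∈ Finset.range i, mm (x.getD k false) (x.getD (k + 1) false)

theorem chg_succ (x : List Bool) (i : ℕ) :
    chg x (i + 1) = chg x i + mm (x.getD i false) (x.getD (i + 1) false) :=
  Finset.sum_range_succ _ _

theorem condense_chg (t : List Bool) : ∀ c, (condense (c :: t)).length = chg (c :: t) t.length + 1 := by
  induction t with
  | nil => intro c; simp [condense, chg]
  | cons d t ih =>
    intro c
    have : chg (c :: d :: t) (d :: t).length = chg (d :: t) t.length + mm c d := by
      simp only [chg, List.length_cons]
      rw [Finset.sum_range_succ']
      simp
    rw [this]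
    unfold condense
    have := ih d
    by_cases h : c = d
    · simp [h, mm, this]
    · simp [h, mm, this]

theorem path_lower (s z : List Bool) (p : List (ℕ × ℕ)) : ∀ (q r : ℕ × ℕ), p.head? = some q →
    p.getLast? = some r → List.IsChain wpStep p →
    chg z r.2 + chg s q.1 + mm (s.getD q.1 false) (z.getD q.2 false) +
      mm (s.getD r.1 false) (z.getD r.2 false) ≤ 2 * pathCost s z p + chg s r.1 + chg z q.2 := by
  induction p with
  | nil => intro q r h; simp at h
  | cons q0 p ih =>
    intro q r hq hr hc
    simp only [List.head?_cons, Option.some.injEq] at hq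
    subst hq
    have hcost : pathCost s z (q0 :: p) = mm (s.getD q0.1 false) (z.getD q0.2 false) + pathCost s z p := by
      simp [pathCost, mm]
    rw [hcost]
    cases p with
    | nil =>
      simp only [List.getLast?_singleton, Option.some.injEq] at hr
      subst hr
      omega
    | cons q1 p =>
      rw [List.getLast?_cons_cons] at hr
      rw [List.isChain_cons_cons] at hc
      have := ih q1 r rfl hr hc.2
      obtain ⟨i, j⟩ := q0
      obtain ⟨i', j'⟩ := q1
      have key : ∀ a b c d : Bool, mm b d ≤ mm a c + mm a b + mm c d ∧ mm b d ≤ mm a b + mm a d ∧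
         mm b d ≤ mm c b + mm c d ∧ mm a b = mm b a := by decide
      rcases hc.1 with ⟨h1, h2⟩ | ⟨h1, h2⟩ | ⟨h1, h2⟩ <;> simp only at h1 h2 this ⊢ <;> subst h1 <;> subst h2 
      · rw [chg_succ] at this
        omega
      · rw [chg_succ] at this
        have := (key (s.getD i' false) (z.getD j false) false (z.getD (j+1) false)).2.1
        omega
      · rw [chg_succ, chg_succ] at this
        have := (key (s.getD i false) (z.getD j false) (s.getD (i+1) false) (z.getD (j+1) false)).1
        omega

theorem nonempty_path (c b : Bool) (t u : List Bool) : ∃ k, WAl (c :: t) (b :: u) k := by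
  induction t generalizing c with
  | nil =>
    induction u generalizing b with
    | nil => exact ⟨_, WAl.base c b⟩
    | cons d u ih => obtain ⟨k, hk⟩ := ih d; exact ⟨_, WAl.right _ _ _ _ _ hk⟩
  | cons d t ih => obtain ⟨k, hk⟩ := ih d; exact ⟨_, WAl.down _ _ _ _ _ hk⟩

theorem dtw_lower (c b : Bool) (t u : List Bool) :
    (condense (b :: u)).length + mm c b ≤ 2 * dtwSq (c :: t) (b :: u) + (condense (c :: t)).length := by
  have hne : {k | ∃ p, IsWarpingPath (c :: t).length (b :: u).length p ∧
      pathCost (c :: t) (b :: u) p = k}.Nonempty := by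
    obtain ⟨k, hk⟩ := nonempty_path c b t u
    exact ⟨k, hk.path⟩
  obtain ⟨p, ⟨h1, h2, h3, h4⟩, hc⟩ := Nat.sInf_mem hne
  have := path_lower (c :: t) (b :: u) p _ _ h1 h2 h3
  have hd : dtwSq (c :: t) (b :: u) = pathCost (c :: t) (b :: u) p := hc.symm
  rw [hd, condense_chg, condense_chg]
  simp [chg] at this ⊢
  omega

theorem le_foldr_max (l : List ℕ) : ∀ a ∈ l, a ≤ l.foldr max 0 := by
  induction l with
  | nil => simp
  | cons b l ih =>
    intro a ha
    rcases List.mem_cons.1 ha with rfl | h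
    · simp
    · have := ih a h
      simp; right; exact this

/-- every mean of binary strings `s₁, …, s_k` has condensation
length at most `m + 1`, where `m` is the maximum condensation length of the
inputs. -/
theorem mean_condensation_upper_bound (ss : List (List Bool)) (hss : ss ≠ [])
    (hne : ∀ s ∈ ss, s ≠ []) (z : List Bool) (hz : IsMean ss z) :
    (condense z).length ≤ ((ss.map fun s => (condense s).length).foldr max 0) + 1 := by
  by_contra hcon
  obtain ⟨hz0, hmin⟩ := hz
  cases z with
  | nil => exact hz0 rfl
  | cons f u =>
  have hl : ∀ s ∈ ss, (condense s).length + 2 ≤ (condense (f :: u)).length := by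
    intro s hs
    have := le_foldr_max _ _ (List.mem_map_of_mem (f := fun s => (condense s).length) hs)
    omega
  obtain ⟨s0, hs0⟩ := List.exists_mem_of_ne_nil ss hss
  have hs0l := hl s0 hs0
  have hs0p : 0 < (condense s0).length := by
    cases s0 with
    | nil => exact absurd rfl (hne _ hs0)
    | cons c t => exact condense_pos c t
  generalize hn : (condense (f :: u)).length = n at *
  by_cases hall : ∀ s ∈ ss, s.head? = some f
  · have hw : altS f (n - 2) ≠ [] := by
      obtain ⟨k, hk⟩ : ∃ k, n - 2 = k + 1 := ⟨n - 3, by omega⟩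
      rw [hk]; simp [altS]
    have hlt : ∀ s ∈ ss, dtwSq s (altS f (n - 2)) < dtwSq s (f :: u) := by
      intro s hs
      have h1 := hl s hs
      have h2 := hall s hs
      cases s with
      | nil => simp at h2
      | cons c t =>
        simp only [List.head?_cons, Option.some.injEq] at h2
        subst h2
        have a1 := (WAl_same t c (n - 2) (by omega)).le
        have a2 := dtw_lower c c t u
        omega
    exact absurd (hmin _ hw) (not_le.2 (List.sum_lt_sum _ _ (fun s hs => (hlt s hs).le) ⟨s0, hs0, hlt s0 hs0⟩))
  · push Not at hall
    obtain ⟨s1, hs1, hs1f⟩ := hall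
    have hw : altS (!f) (n - 1) ≠ [] := by
      obtain ⟨k, hk⟩ : ∃ k, n - 1 = k + 1 := ⟨n - 2, by omega⟩
      rw [hk]; simp [altS]
    have hle : ∀ s ∈ ss, dtwSq s (altS (!f) (n - 1)) ≤ dtwSq s (f :: u) ∧
        (s.head? ≠ some f → dtwSq s (altS (!f) (n - 1)) < dtwSq s (f :: u)) := by
      intro s hs
      have h1 := hl s hs
      cases s with
      | nil => exact absurd rfl (hne _ hs)
      | cons c t =>
        have a2 := dtw_lower c f t u
        by_cases h2 : c = f
        · subst h2
          have a1 := (WAl_diff t c (n - 1) (by omega)).le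
          refine ⟨by omega, fun h => absurd rfl h⟩
        · have a1 := (WAl_same t c (n - 1) (by omega)).le
          have h3 : (!f) = c := by cases c <;> cases f <;> simp_all
          rw [h3]
          simp only [mm, h2, if_false] at a2
          refine ⟨by omega, fun _ => by omega⟩
    exact absurd (hmin _ hw) (not_le.2 (List.sum_lt_sum _ _ (fun s hs => (hle s hs).1)
      ⟨s1, hs1, (hle s1 hs1).2 hs1f⟩))
end

section
/- Let x be a condensed binary string of length ℓ and let x' be the condensed string of length ℓ + 2 obtained from x by appending the two symbols 1 − x[ℓ] and x[ℓ]. Then for every binary string s with |s̃| > ℓ + 2 it holds that dtw(x', s)² ≤ dtw(x, s)² − 1. -/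
def dd (a b : Bool) : ℕ := if a = b then 0 else 1

inductive WW : List Bool → List Bool → ℕ → Prop
  | base (a b : Bool) : WW [a] [b] (dd a b)
  | down (a b : Bool) (x s : List Bool) (c : ℕ) : WW x (b :: s) c → WW (a :: x) (b :: s) (dd a b + c)
  | right (a b : Bool) (x s : List Bool) (c : ℕ) : WW (a :: x) s c → WW (a :: x) (b :: s) (dd a b + c)
  | diag (a b : Bool) (x s : List Bool) (c : ℕ) : WW x s c → WW (a :: x) (b :: s) (dd a b + c)

theorem WW.of_path (x s : List Bool) (p : List (ℕ × ℕ)) : ∀ i j, p.head? = some (i, j) →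
    p.getLast? = some (x.length - 1, s.length - 1) → List.IsChain wpStep p →
    (∀ q ∈ p, q.1 < x.length ∧ q.2 < s.length) →
    WW (x.drop i) (s.drop j) (pathCost x s p) := by
  induction p with
  | nil => intro i j h; simp at h
  | cons q p ih =>
    intro i j hh hl hc hb
    simp only [List.head?_cons, Option.some.injEq] at hh
    subst hh
    have hq := hb (i, j) (by simp)
    simp only at hq
    have hcost : pathCost x s ((i, j) :: p) = dd x[i] s[j] + pathCost x s p := by
      simp [pathCost, dd, List.getD_eq_getElem?_getD, hq.1, hq.2]
    rw [hcost, List.drop_eq_getElem_cons hq.1, List.drop_eq_getElem_cons hq.2]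
    cases p with
    | nil =>
      simp at hl
      have h1 : x.drop (i+1) = [] := by simp; omega
      have h2 : s.drop (j+1) = [] := by simp; omega
      rw [h1, h2]
      exact WW.base _ _
    | cons r p =>
      obtain ⟨i', j'⟩ := r
      rw [List.isChain_cons_cons] at hc
      have := ih i' j' (by simp) (by simpa using hl) hc.2 (fun q hq => hb q (by simp [hq]))
      rcases hc.1 with ⟨h1, h2⟩ | ⟨h1, h2⟩ | ⟨h1, h2⟩ <;> simp only at h1 h2 <;> subst h1 h2
      · rw [List.drop_eq_getElem_cons hq.2] at this
        exact WW.down _ _ _ _ _ this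
      · rw [List.drop_eq_getElem_cons hq.1] at this
        exact WW.right _ _ _ _ _ this
      · exact WW.diag _ _ _ _ _ this

theorem drop_info {x y : List Bool} {a : Bool} {i : ℕ} (h : a :: y = x.drop i) :
    i < x.length ∧ x.getD i false = a ∧ y = x.drop (i+1) := by
  have h1 : i < x.length := by
    by_contra hh
    rw [List.drop_eq_nil_of_le (by omega)] at h
    simp at h
  rw [List.drop_eq_getElem_cons h1] at h
  rw [List.cons.injEq] at h
  refine ⟨h1, ?_, h.2⟩
  rw [h.1]
  simp [h1]

theorem WW.to_path (x s : List Bool) {X S : List Bool} {c : ℕ} (h : WW X S c) :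
    ∀ i j, X = x.drop i → S = s.drop j → ∃ p, p.head? = some (i, j) ∧
    p.getLast? = some (x.length - 1, s.length - 1) ∧ List.IsChain wpStep p ∧
    (∀ q ∈ p, q.1 < x.length ∧ q.2 < s.length) ∧ pathCost x s p = c := by
  have key : ∀ (a b : Bool) (i j i' j' : ℕ) (c : ℕ), i < x.length → j < s.length →
      x.getD i false = a → s.getD j false = b → wpStep (i,j) (i',j') →
      (∃ p, p.head? = some (i', j') ∧
    p.getLast? = some (x.length - 1, s.length - 1) ∧ List.IsChain wpStep p ∧
    (∀ q ∈ p, q.1 < x.length ∧ q.2 < s.length) ∧ pathCost x s p = c) → 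
      (∃ p, p.head? = some (i, j) ∧
    p.getLast? = some (x.length - 1, s.length - 1) ∧ List.IsChain wpStep p ∧
    (∀ q ∈ p, q.1 < x.length ∧ q.2 < s.length) ∧ pathCost x s p = dd a b + c) := by
    rintro a b i j i' j' c hi hj ha hb hst ⟨p, h1, h2, h3, h4, h5⟩
    cases p with
    | nil => simp at h1
    | cons r p =>
      simp only [List.head?_cons, Option.some.injEq] at h1
      subst h1
      refine ⟨(i,j) :: (i',j') :: p, by simp, by simpa using h2, ?_, ?_, ?_⟩
      · rw [List.isChain_cons_cons]; exact ⟨hst, h3⟩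
      · intro q hq
        rw [List.mem_cons] at hq
        rcases hq with rfl | hq
        · exact ⟨hi, hj⟩
        · exact h4 q hq
      · rw [← h5, ← ha, ← hb]
        simp [pathCost, dd]
  induction h with
  | base a b =>
    intro i j hi hj
    obtain ⟨h1, h2, h3⟩ := drop_info hi
    obtain ⟨g1, g2, g3⟩ := drop_info hj
    have h3 := h3.symm
    have g3 := g3.symm
    rw [List.drop_eq_nil_iff] at h3 g3
    refine ⟨[(i,j)], by simp, ?_, by simp, by simp [h1, g1], ?_⟩
    · simp; omega
    · rw [← h2, ← g2]; simp [pathCost, dd]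
  | down a b X S c h ih =>
    intro i j hi hj
    obtain ⟨h1, h2, h3⟩ := drop_info hi
    obtain ⟨g1, g2, g3⟩ := drop_info hj
    exact key a b i j (i+1) j c h1 g1 h2 g2 (by simp [wpStep]) (ih _ _ h3 hj)
  | right a b X S c h ih =>
    intro i j hi hj
    obtain ⟨h1, h2, h3⟩ := drop_info hi
    obtain ⟨g1, g2, g3⟩ := drop_info hj
    exact key a b i j i (j+1) c h1 g1 h2 g2 (by simp [wpStep]) (ih _ _ hi g3)
  | diag a b X S c h ih =>
    intro i j hi hj
    obtain ⟨h1, h2, h3⟩ := drop_info hi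
    obtain ⟨g1, g2, g3⟩ := drop_info hj
    exact key a b i j (i+1) (j+1) c h1 g1 h2 g2 (by simp [wpStep]) (ih _ _ h3 g3)

theorem WW.exists_single (a : Bool) : ∀ s : List Bool, s ≠ [] → ∃ c, WW [a] s c
  | [], h => absurd rfl h
  | [b], _ => ⟨_, WW.base a b⟩
  | b :: b' :: t, _ => by
    obtain ⟨c, hc⟩ := WW.exists_single a (b' :: t) (by simp)
    exact ⟨_, WW.right a b _ _ _ hc⟩

theorem WW.exists_cost : ∀ x s : List Bool, x ≠ [] → s ≠ [] → ∃ c, WW x s c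
  | [], _, h, _ => absurd rfl h
  | _, [], _, h => absurd rfl h
  | [a], s, _, h => WW.exists_single a s h
  | a :: a' :: x, b :: s, _, _ => by
    obtain ⟨c, hc⟩ := WW.exists_cost (a' :: x) (b :: s) (by simp) (by simp)
    exact ⟨_, WW.down a b _ _ _ hc⟩

theorem WW.ne_left {x s : List Bool} {c : ℕ} (h : WW x s c) : x ≠ [] := by cases h <;> simp
theorem WW.ne_right {x s : List Bool} {c : ℕ} (h : WW x s c) : s ≠ [] := by cases h <;> simp

theorem condense_cons_le (b : Bool) (t : List Bool) :
    (condense (b :: t)).length ≤ (condense t).length + 1 := by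
  cases t with
  | nil => simp [condense]
  | cons c t => rw [condense]; split <;> simp

theorem le_condense_cons (b : Bool) (t : List Bool) :
    (condense t).length ≤ (condense (b :: t)).length := by
  cases t with
  | nil => simp [condense]
  | cons c t => rw [condense]; split <;> simp

theorem WW.zero {x s : List Bool} {c : ℕ} (h : WW x s c) : c = 0 →
    x.head? = s.head? ∧ (condense s).length ≤ x.length := by
  induction h with
  | base a b => simp [dd, condense]
  | down a b X S c h ih =>
    intro h0
    have := ih (by omega)
    have : a = b := by by_contra hh; simp [dd, hh] at h0
    simp_all; omega
  | right a b X S c h ih =>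
    intro h0
    have h1 := ih (by omega)
    have : a = b := by by_contra hh; simp [dd, hh] at h0
    subst this
    cases S with
    | nil => simp at h1
    | cons d S =>
      have : a = d := by simpa using h1.1
      subst this
      refine ⟨rfl, ?_⟩
      rw [condense]; simpa using h1.2
  | diag a b X S c h ih =>
    intro h0
    have h1 := ih (by omega)
    have : a = b := by by_contra hh; simp [dd, hh] at h0
    subst this
    have := condense_cons_le a S
    refine ⟨rfl, ?_⟩
    simp; omega

/-- zero cost alignment -/
theorem WW.mk_zero : ∀ (t x : List Bool), List.IsChain (· ≠ ·) x → x ≠ [] → x.head? = t.head? →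
    (condense t).length = x.length → WW x t 0
  | [], x, _, h, h', _ => by cases x <;> simp_all
  | [b], x, _, h, h', hl => by
    match x, h with
    | [a], _ =>
      have : a = b := by simpa using h'
      subst this
      simpa [dd] using WW.base a a
    | _ :: _ :: _, _ => simp [condense] at hl
  | b :: d :: t, a :: x, hc, h, h', hl => by
    have : a = b := by simpa using h'
    subst this
    by_cases hd : a = d
    · subst hd
      have := WW.mk_zero (a :: t) (a :: x) hc h rfl (by rw [condense] at hl; simpa using hl)
      simpa [dd] using WW.right a a _ _ _ this
    · rw [condense, if_neg hd] at hl
      simp only [List.length_cons, Nat.add_right_cancel_iff] at hl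
      have hx : x ≠ [] := by
        rintro rfl
        have := WW.exists_single a (d :: t) (by simp)
        have h2 : ∀ t : List Bool, ∀ d, condense (d :: t) ≠ [] := by
          intro t
          induction t with
          | nil => simp [condense]
          | cons e t ih => intro d; rw [condense]; split
                           · exact ih e
                           · simp
        exact h2 t d (List.length_eq_zero_iff.mp hl)
      have := WW.mk_zero (d :: t) x (by cases x <;> simp_all) hx (by
        cases x with
        | nil => simp at hx
        | cons e x =>
          have : a ≠ e := by simp at hc; exact hc.1
          revert hd this; cases a <;> cases d <;> cases e <;> simp) hl
      simpa [dd] using WW.diag a a _ _ _ this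

theorem WW.cons_same {x t : List Bool} {a : Bool} {c : ℕ} (h : WW (a :: x) t c) :
    WW (a :: x) (a :: t) c := by
  simpa [dd] using WW.right a a _ _ _ h

theorem WW.diag_same {x t : List Bool} {a : Bool} {c : ℕ} (h : WW x t c) :
    WW (a :: x) (a :: t) c := by
  simpa [dd] using WW.diag a a _ _ _ h

theorem WW.keyL (a : Bool) (y : List Bool) (hc : List.IsChain (· ≠ ·) (a :: y)) :
    ∀ (t : List Bool) (c : ℕ), WW (a :: y) ((!a) :: t) c → 2 ≤ (condense ((!a) :: t)).length →
    (∃ c', c' ≤ c ∧ WW y ((!a) :: t) c') ∨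
      (∃ c', c' + 1 ≤ c ∧ WW ((!a) :: a :: y) ((!a) :: t) c')
  | t, c, h, hl => by
    have hy : ∀ u c, WW y u c → WW y ((!a) :: u) c := by
      intro u c h
      cases y with
      | nil => exact absurd rfl h.ne_left
      | cons e y =>
        have : e = !a := by simp at hc; have := hc.1; revert this; cases a <;> cases e <;> simp
        subst this
        exact h.cons_same
    cases h with
    | base => simp [condense] at hl
    | down _ _ _ _ c h => exact Or.inl ⟨c, by omega, h⟩
    | diag _ _ _ _ c h => exact Or.inl ⟨c, by omega, hy _ _ h⟩
    | right _ _ _ _ c h =>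
      have h1 : dd a (!a) = 1 := by cases a <;> rfl
      rw [h1]
      cases t with
      | nil => exact absurd rfl h.ne_right
      | cons u0 u =>
        by_cases hu : u0 = a
        · subst hu
          exact Or.inr ⟨c, by omega, h.diag_same⟩
        · have : u0 = !a := by revert hu; cases a <;> cases u0 <;> simp
          subst this
          rw [condense, if_pos rfl] at hl
          rcases WW.keyL a y hc u c h hl with ⟨c', h1, h2⟩ | ⟨c', h1, h2⟩
          · exact Or.inl ⟨c', by omega, hy _ _ h2⟩
          · exact Or.inr ⟨c', by omega, h2.cons_same⟩

def extd (x : List Bool) : List Bool := x ++ [!x.getLastD false, x.getLastD false]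

theorem extd_cons (a : Bool) (y : List Bool) (h : y ≠ []) : extd (a :: y) = a :: extd y := by
  cases y with
  | nil => simp at h
  | cons b y => simp [extd, List.getLastD]

theorem extd_eq (a : Bool) : ∀ (y : List Bool), List.IsChain (· ≠ ·) (a :: y) →
    extd (a :: y) = a :: (!a) :: a :: y
  | [], _ => by simp [extd, List.getLastD]
  | b :: y, h => by
    have hb : b = !a := by simp at h; have := h.1; revert this; cases a <;> cases b <;> simp
    rw [extd_cons _ _ (by simp), extd_eq b y (by simp at h; exact h.2), hb]
    simp

theorem WW.main : ∀ (n : ℕ) (x s : List Bool) (c : ℕ), x.length + s.length ≤ n →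
    List.IsChain (· ≠ ·) x → WW x s c → x.length + 2 < (condense s).length →
    ∃ c', c' + 1 ≤ c ∧ WW (extd x) s c' := by
  intro n
  induction n with
  | zero =>
    intro x s c hn _ h _
    exact absurd (List.length_eq_zero_iff.mp (by omega)) h.ne_left
  | succ n ih =>
    intro x s c hn hc h hl
    have htail : ∀ a y, List.IsChain (· ≠ ·) (a :: y : List Bool) → List.IsChain (· ≠ ·) y := by
      intro a y h; cases y <;> simp_all
    cases h with
    | base => simp [condense] at hl
    | down a b y t c h =>
      simp only [List.length_cons] at hn hl
      obtain ⟨c', h1, h2⟩ := ih y (b :: t) c (by simp; omega) (htail _ _ hc) h (by omega)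
      rw [extd_cons _ _ h.ne_left]
      exact ⟨_, by omega, WW.down a b _ _ _ h2⟩
    | diag a b y t c h =>
      simp only [List.length_cons] at hn hl
      have := condense_cons_le b t
      obtain ⟨c', h1, h2⟩ := ih y t c (by omega) (htail _ _ hc) h (by omega)
      rw [extd_cons _ _ h.ne_left]
      exact ⟨_, by omega, WW.diag a b _ _ _ h2⟩
    | right a b y t c h =>
      simp only [List.length_cons] at hn hl
      have hle := condense_cons_le b t
      have hE := extd_eq a y hc
      by_cases hbig : y.length + 1 + 2 < (condense t).length
      · obtain ⟨c', h1, h2⟩ := ih (a :: y) t c (by simp; omega) hc h (by simpa using hbig)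
        rw [hE] at h2 ⊢
        exact ⟨_, by omega, WW.right a b _ _ _ h2⟩
      · have hlt : (condense t).length = y.length + 3 := by omega
        cases t with
        | nil => exact absurd rfl h.ne_right
        | cons t0 u =>
          have hbt : t0 = !b := by
            by_contra hh
            have : b = t0 := by revert hh; cases b <;> cases t0 <;> simp
            rw [condense, if_pos this] at hl
            omega
          subst hbt
          by_cases hab : a = b
          · subst hab
            rcases WW.keyL a y hc u c h (by omega) with ⟨c', h1, h2⟩ | ⟨c', h1, h2⟩
            · obtain ⟨c'', h3, h4⟩ := ih y _ c' (by simp at hn ⊢; omega) (htail _ _ hc) h2 (by omega)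
              rw [extd_cons _ _ h2.ne_left]
              exact ⟨c'', by omega, h4.diag_same⟩
            · rw [hE]
              exact ⟨c', by omega, h2.diag_same⟩
          · have hba : b = !a := by revert hab; cases a <;> cases b <;> simp
            subst hba
            have hd : dd a (!a) = 1 := by cases a <;> rfl
            have h0 : c ≠ 0 := by
              intro hc0
              have := (h.zero hc0).2
              simp at this hlt
              omega
            have hz : WW (a :: (!a) :: a :: y) ((! !a) :: u) 0 := by
              apply WW.mk_zero
              · simp only [List.isChain_cons_cons]
                refine ⟨by simp, by simp, hc⟩
              · simp
              · simp
              · rw [hlt]; simp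
            rw [hE]
            exact ⟨_, by omega, WW.right a (!a) _ _ _ hz⟩

/-- extending a condensed string `x` of length `ℓ` by the two
symbols `1 - x[ℓ]`, `x[ℓ]` decreases the squared dtw distance to any string
`s` with `|s̃| > ℓ + 2` by at least one. -/
theorem extend_decreases_dtwSq (x : List Bool) (hx : x ≠ [])
    (hc : List.Chain' (· ≠ ·) x) (s : List Bool) (hs : s ≠ [])
    (hlen : x.length + 2 < (condense s).length) :
    dtwSq (x ++ [!x.getLastD false, x.getLastD false]) s + 1 ≤ dtwSq x s := by
  have hne : {c | ∃ p, IsWarpingPath x.length s.length p ∧ pathCost x s p = c}.Nonempty := by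
    obtain ⟨c, h⟩ := WW.exists_cost x s hx hs
    obtain ⟨p, h1, h2, h3, h4, h5⟩ := h.to_path x s 0 0 (by simp) (by simp)
    exact ⟨c, p, ⟨h1, h2, h3, h4⟩, h5⟩
  obtain ⟨p, ⟨h1, h2, h3, h4⟩, h5⟩ := Nat.sInf_mem hne
  have hW := WW.of_path x s p 0 0 h1 h2 h3 h4
  rw [List.drop_zero, List.drop_zero, h5] at hW
  obtain ⟨c', hc', hW'⟩ := WW.main _ x s _ le_rfl hc hW hlen
  obtain ⟨p', g1, g2, g3, g4, g5⟩ := hW'.to_path (extd x) s 0 0 (by simp) (by simp)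
  have : dtwSq (extd x) s ≤ c' := Nat.sInf_le ⟨p', ⟨g1, g2, g3, g4⟩, g5⟩
  exact le_trans (Nat.add_le_add_right this 1) hc'
end

section
/- For the two input strings s_1 = 000 and s_2 = 111, the strings 01 and 10 are means: F(01) = F(10) = 2 and F(z) ≥ 2 for every binary string z. Moreover, no binary string with exactly one block is a mean, so there are means whose condensation length exceeds the maximum condensation length of the inputs by one (showing the upper bound m + 1 on the condensation length of a mean is tight). -/
lemma aux_visit (p : List (ℕ × ℕ)) : ∀ (a b : ℕ × ℕ), p.head? = some a → p.getLast? = some b →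
    List.IsChain wpStep p →
    b.1 + 1 ≤ a.1 + p.length ∧ ∀ j, a.2 ≤ j → j ≤ b.2 → ∃ q ∈ p, q.2 = j := by
  induction p with
  | nil => intro a b h; simp at h
  | cons c t ih =>
    intro a b h1 h2 h3
    simp at h1
    subst h1
    cases t with
    | nil =>
      simp at h2
      subst h2
      refine ⟨by simp, fun j hj hj' => ⟨c, by simp, by omega⟩⟩
    | cons d t =>
      rw [List.isChain_cons_cons] at h3
      obtain ⟨hs, hc⟩ := h3
      have h2' : (d :: t).getLast? = some b := by
        simpa [List.getLast?_cons_cons] using h2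
      obtain ⟨i1, i2⟩ := ih d b rfl h2' hc
      have hd : d.1 ≤ c.1 + 1 ∧ d.2 ≤ c.2 + 1 := by
        unfold wpStep at hs; omega
      refine ⟨by simp only [List.length_cons] at *; omega, fun j hj hj' => ?_⟩
      by_cases e : c.2 = j
      · exact ⟨c, by simp, e⟩
      · obtain ⟨q, hq, hq'⟩ := i2 j (by omega) hj'
        exact ⟨q, by simp [List.mem_cons.mp hq], hq'⟩

lemma aux_exists (n : ℕ) : ∃ p, IsWarpingPath 3 (n + 1) p := by
  induction n with
  | zero =>
    refine ⟨[(0,0),(1,0),(2,0)], ?_⟩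
    simp [IsWarpingPath, wpStep, List.Chain']
  | succ n ih =>
    obtain ⟨p, h1, h2, h3, h4⟩ := ih
    refine ⟨p ++ [(2, n+1)], ?_, by simp, ?_, ?_⟩
    · rw [List.head?_append, h1]; rfl
    · refine List.IsChain.append h3 (by simp) ?_
      intro x hx y hy
      rw [h2] at hx
      simp at hx hy
      subst hx hy
      simp [wpStep]
    · intro q hq
      rcases List.mem_append.mp hq with hq | hq
      · have := h4 q hq; omega
      · simp at hq; subst hq; simp

lemma aux_path (b : Bool) (z : List Bool) (hz : z ≠ []) :
    ∃ p, IsWarpingPath 3 z.length p ∧ pathCost [b,b,b] z p = dtwSq [b,b,b] z := by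
  have hne : {c | ∃ p, IsWarpingPath [b,b,b].length z.length p ∧
      pathCost [b,b,b] z p = c}.Nonempty := by
    obtain ⟨n, hn⟩ := Nat.exists_eq_succ_of_ne_zero (by simpa using hz : z.length ≠ 0)
    obtain ⟨p, hp⟩ := aux_exists n
    exact ⟨_, p, by rw [hn]; exact hp, rfl⟩
  exact Nat.sInf_mem hne

lemma aux_getD (b : Bool) (i : ℕ) (h : i < 3) : [b,b,b].getD i false = b := by
  interval_cases i <;> rfl

lemma aux_one (b : Bool) (z : List Bool) (h : (!b) ∈ z) : 1 ≤ dtwSq [b,b,b] z := by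
  have hz : z ≠ [] := List.ne_nil_of_mem h
  obtain ⟨p, ⟨h1, h2, h3, h4⟩, hc⟩ := aux_path b z hz
  rw [← hc]
  obtain ⟨j, hj, hj'⟩ := List.mem_iff_getElem.mp h
  obtain ⟨q, hq, rfl⟩ := (aux_visit p _ _ h1 h2 h3).2 j (by simp) (by simp; omega)
  unfold pathCost
  refine le_trans (le_of_eq ?_) (List.single_le_sum (by simp) _ (List.mem_map_of_mem hq))
  rw [aux_getD b _ (h4 q hq).1, List.getD_eq_getElem _ _ hj, hj']
  cases b <;> rfl

lemma aux_three (b : Bool) (z : List Bool) (hz : z ≠ []) (h : ∀ c ∈ z, c = !b) :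
    3 ≤ dtwSq [b,b,b] z := by
  obtain ⟨p, ⟨h1, h2, h3, h4⟩, hc⟩ := aux_path b z hz
  rw [← hc]
  have hl := (aux_visit p _ _ h1 h2 h3).1
  have : pathCost [b,b,b] z p = p.length := by
    unfold pathCost
    rw [List.map_congr_left (g := fun _ => 1)]
    · simp
    · intro q hq
      rw [aux_getD b _ (h4 q hq).1, List.getD_eq_getElem _ _ (h4 q hq).2,
        h _ (List.getElem_mem _)]
      cases b <;> rfl
  simp at hl
  omega

lemma aux_F (z : List Bool) : Fobj [[false, false, false], [true, true, true]] z =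
    dtwSq [false, false, false] z + dtwSq [true, true, true] z := by
  simp [Fobj]

lemma aux_const (b : Bool) (z : List Bool) (hz : z ≠ []) (h : ∀ c ∈ z, c = b) :
    3 ≤ Fobj [[false, false, false], [true, true, true]] z := by
  rw [aux_F]
  cases b
  · have := aux_three true z hz h; omega
  · have := aux_three false z hz h; omega

lemma aux_ge (z : List Bool) (hz : z ≠ []) :
    2 ≤ Fobj [[false, false, false], [true, true, true]] z := by
  by_cases h0 : false ∈ z
  · by_cases h1 : true ∈ z
    · have a := aux_one false z h1
      have b := aux_one true z h0
      rw [aux_F]; omega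
    · have := aux_const false z hz (fun c hc => by cases c; rfl; exact absurd hc h1)
      omega
  · have := aux_const true z hz (fun c hc => by cases c; exact absurd hc h0; rfl)
    omega

lemma aux_condense_pos (a : Bool) (l : List Bool) : 1 ≤ (condense (a :: l)).length := by
  induction l generalizing a with
  | nil => simp [condense]
  | cons b l ih =>
    rw [condense]
    split
    · exact ih b
    · simp

lemma aux_condense (a : Bool) (l : List Bool) (h : (condense (a :: l)).length = 1) :
    ∀ c ∈ a :: l, c = a := by
  induction l generalizing a with
  | nil => simp
  | cons b l ih =>
    rw [condense] at h
    split at h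
    · rename_i e
      subst e
      have := ih a h
      intro c hc
      rcases List.mem_cons.mp hc with hc | hc
      · exact hc
      · exact this c hc
    · have := aux_condense_pos b l
      simp only [List.length_cons] at h
      omega

lemma aux_le (b : Bool) (z : List Bool) (p : List (ℕ × ℕ)) (hp : IsWarpingPath 3 z.length p) :
    dtwSq [b,b,b] z ≤ pathCost [b,b,b] z p := Nat.sInf_le ⟨p, hp, rfl⟩

lemma aux_w1 : IsWarpingPath 3 2 [(0,0),(1,0),(2,1)] := by
  simp [IsWarpingPath, wpStep, List.Chain']

lemma aux_w2 : IsWarpingPath 3 2 [(0,0),(1,1),(2,1)] := by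
  simp [IsWarpingPath, wpStep, List.Chain']

lemma aux_01 : Fobj [[false, false, false], [true, true, true]] [false, true] = 2 := by
  apply le_antisymm _ (aux_ge _ (by simp))
  rw [aux_F]
  exact add_le_add (aux_le false [false, true] _ aux_w1) (aux_le true [false, true] _ aux_w2)

lemma aux_10 : Fobj [[false, false, false], [true, true, true]] [true, false] = 2 := by
  apply le_antisymm _ (aux_ge _ (by simp))
  rw [aux_F]
  exact add_le_add (aux_le false [true, false] _ aux_w2) (aux_le true [true, false] _ aux_w1)

/-- for the inputs `000` and `111` (encoded with `0 = false`,
`1 = true`), the strings `01` and `10` are means with `F`-value `2`, every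
nonempty binary string has `F`-value at least `2`, no string with exactly one
block is a mean, and the means `01`/`10` have condensation length `m + 1`
where `m = 1` is the maximum input condensation length (tightness of the
upper bound). -/
theorem mean_upper_bound_tight :
    let ss : List (List Bool) := [[false, false, false], [true, true, true]]
    Fobj ss [false, true] = 2 ∧ Fobj ss [true, false] = 2 ∧
    (∀ z : List Bool, z ≠ [] → 2 ≤ Fobj ss z) ∧
    IsMean ss [false, true] ∧ IsMean ss [true, false] ∧
    (∀ z : List Bool, z ≠ [] → (condense z).length = 1 → ¬ IsMean ss z) ∧
    (condense [false, true]).length =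
      ((ss.map fun s => (condense s).length).foldr max 0) + 1 := by
  intro ss
  refine ⟨aux_01, aux_10, aux_ge, ⟨by simp, fun w hw => ?_⟩, ⟨by simp, fun w hw => ?_⟩, ?_, ?_⟩
  · exact aux_01.le.trans (aux_ge w hw)
  · exact aux_10.le.trans (aux_ge w hw)
  · intro z hz hc hm
    have h2 := (hm.2 [false, true] (by simp)).trans aux_01.le
    cases z with
    | nil => exact hz rfl
    | cons a l =>
      have h3 := aux_const a (a :: l) hz (aux_condense a l hc)
      exact absurd (h3.trans h2) (by norm_num)
  · simp [ss, condense]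
end
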